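/- arXiv:1909.12477 — 2 statements merged into one kernel-verified Lean document; each statement's English description precedes it below -/
import Mathlib

section
/- For every function f in the weighted space L²(ℝⁿ, e^{-|x|²}) and every real constant a, there exists a weak solution u ∈ L²(ℝⁿ, e^{-|x|²}) of the equation Δu + au = f on ℝⁿ satisfying the estimate ∫_{ℝⁿ} u² e^{-|x|²} dx ≤ (1/(8n)) ∫_{ℝⁿ} f² e^{-|x|²} dx. -/
open MeasureTheory Real

noncomputable def lap {n : ℕ} (f : EuclideanSpace ℝ (Fin n) → ℝ)
    (x : EuclideanSpace ℝ (Fin n)) : ℝ :=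
  ∑ i : Fin n, fderiv ℝ (fun y => fderiv ℝ f y (EuclideanSpace.single i 1)) x
    (EuclideanSpace.single i 1)

/-- `u` is a weak solution of `Δu + a u = f` on `ℝⁿ`. -/
def IsWeakSolution {n : ℕ} (a : ℝ) (u f : EuclideanSpace ℝ (Fin n) → ℝ) : Prop :=
  ∀ ψ : EuclideanSpace ℝ (Fin n) → ℝ, ContDiff ℝ (⊤ : ℕ∞) ψ → HasCompactSupport ψ →
    ∫ x, u x * (lap ψ x + a * ψ x) = ∫ x, f x * ψ x

/-!
Let `φ x = ∑ i, c i * x i ^ 2` with `0 ≤ c i`. In `L²(exp φ)` the formal adjoint of `∂ᵢ` is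
`bᵢ = -∂ᵢ - 2 cᵢ xᵢ`, and `⁅bᵢ, ∂ⱼ⁆ = 2 cᵢ δᵢⱼ`: these are creation and annihilation operators. The
operator `T = ∑ ∂ᵢ² + a` has adjoint `T' = ∑ bᵢ² + a`, so that
`‖T ψ‖² = ‖T' ψ‖² + ⟨ψ, ⁅T', T⁆ ψ⟩`, and the commutation relations give
`⁅T', T⁆ = ∑ (8 cᵢ ∂ᵢ bᵢ + 8 cᵢ²)`, where `⟨ψ, ∂ᵢ bᵢ ψ⟩ = ‖bᵢ ψ‖² ≥ 0`. Hence
`‖T ψ‖² ≥ 8 (∑ cᵢ²) ‖ψ‖²` for every test function `ψ`. Since `L²(exp (-φ))` is dual to `L²(exp φ)`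
under the unweighted pairing, this a priori estimate is equivalent to the solvability of `T u = f`
in `L²(exp (-φ))` with the corresponding bound. The estimate for `|x|²` is the case `c = 1`.
-/

section CanonicalCommutation

variable {R A ι : Type*} [CommRing R] [Ring A] [Algebra R A]

theorem lie_sq_sq_of_lie_eq_smul_one {b d : A} {c : R} (h : ⁅b, d⁆ = c • 1) :
    ⁅b ^ 2, d ^ 2⁆ = (4 * c) • (d * b) + (2 * c ^ 2) • 1 := by
  have hbd : b * d = d * b + c • 1 := by
    rw [← h, Ring.lie_def, add_sub_cancel]
  have hbd2 : b * d ^ 2 = d ^ 2 * b + (2 * c) • d := by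
    rw [sq, ← mul_assoc, hbd, add_mul, mul_assoc, hbd, mul_add, ← mul_assoc, mul_smul_comm,
      mul_one, smul_mul_assoc, one_mul]
    module
  have hb2d2 : b ^ 2 * d ^ 2 = d ^ 2 * b ^ 2 + (4 * c) • (d * b) + (2 * c ^ 2) • 1 := by
    rw [sq b, mul_assoc, hbd2, mul_add, ← mul_assoc, hbd2, add_mul, mul_smul_comm, hbd,
      mul_assoc, smul_mul_assoc]
    module
  rw [Ring.lie_def, hb2d2]
  abel

theorem lie_sum_sq_sum_sq_of_lie_eq [Fintype ι] [DecidableEq ι] {b d : ι → A} {c : ι → R}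
    (h : ∀ i j, ⁅b i, d j⁆ = if i = j then c i • 1 else 0) :
    ⁅∑ i, b i ^ 2, ∑ j, d j ^ 2⁆ =
      ∑ i, ((4 * c i) • (d i * b i) + (2 * c i ^ 2) • 1) := by
  have hoff : ∀ i j, i ≠ j → ⁅b i ^ 2, d j ^ 2⁆ = 0 := fun i j hij => by
    have hcomm : Commute (b i) (d j) := commute_iff_lie_eq.2 (by rw [h, if_neg hij])
    exact (hcomm.pow_pow 2 2).lie_eq
  simp only [Ring.lie_def, Finset.sum_mul_sum] at hoff ⊢
  rw [Finset.sum_comm (f := fun i j => d i ^ 2 * b j ^ 2), ← Finset.sum_sub_distrib]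
  simp only [← Finset.sum_sub_distrib]
  refine Finset.sum_congr rfl fun i _ => ?_
  rw [Finset.sum_eq_single i (fun j _ hj => hoff i j hj.symm) (by simp)]
  exact lie_sq_sq_of_lie_eq_smul_one (by rw [h, if_pos rfl])

variable {V : Type*} [AddCommGroup V] [Module R V] {B : LinearMap.BilinForm R V}

theorem bilinForm_apply_self_eq_add_lie {T T' : Module.End R V}
    (hB : B.IsSymm) (hT : B.IsAdjointPair B T T') (v : V) :
    B (T v) (T v) = B (T' v) (T' v) + B v (⁅T', T⁆ v) := by
  have hcomm : T' (T v) = T (T' v) + ⁅T', T⁆ v := by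
    rw [Ring.lie_def, LinearMap.sub_apply, Module.End.mul_apply, Module.End.mul_apply,
      add_sub_cancel]
  rw [hT, hcomm, map_add, hB.eq v (T _), hT]

theorem sum_sq_mul_le_of_canonical_commutation [LinearOrder R] [IsStrictOrderedRing R] [Fintype ι]
    [DecidableEq ι] (hB : B.IsPosSemidef) {b d : ι → Module.End R V} {c : ι → R}
    (hadj : ∀ i, B.IsAdjointPair B (d i) (b i)) (hc : ∀ i, 0 ≤ c i)
    (hccr : ∀ i j, ⁅b i, d j⁆ = if i = j then c i • 1 else 0) (a : R) (v : V) :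
    2 * (∑ i, c i ^ 2) * B v v ≤
      B ((∑ i, d i ^ 2 + algebraMap R (Module.End R V) a) v)
        ((∑ i, d i ^ 2 + algebraMap R (Module.End R V) a) v) := by
  set T : Module.End R V := ∑ i, d i ^ 2 + algebraMap R _ a
  set T' : Module.End R V := ∑ i, b i ^ 2 + algebraMap R _ a
  have hT : B.IsAdjointPair B T T' := fun x y => by
    simp [T, T', sq, hadj _ _ _]
  have hlie : ⁅T', T⁆ = ∑ i, ((4 * c i) • (d i * b i) + (2 * c i ^ 2) • 1) := by
    rw [← lie_sum_sq_sum_sq_of_lie_eq hccr]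
    simp only [T, T', Ring.lie_def, mul_add, add_mul, Algebra.commutes]
    abel
  have hterm : ∀ i, B v (((4 * c i) • (d i * b i) + (2 * c i ^ 2) • (1 : Module.End R V)) v)
      = 4 * c i * B (b i v) (b i v) + 2 * c i ^ 2 * B v v := fun i => by
    simp [hB.eq v, hadj i _ _]
  calc 2 * (∑ i, c i ^ 2) * B v v = ∑ i, 2 * c i ^ 2 * B v v := by
        rw [Finset.mul_sum, Finset.sum_mul]
    _ ≤ ∑ i, (4 * c i * B (b i v) (b i v) + 2 * c i ^ 2 * B v v) := by
        gcongr with i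
        exact le_add_of_nonneg_left (mul_nonneg (mul_nonneg zero_le_four (hc i)) (hB.nonneg _))
    _ = B v (⁅T', T⁆ v) := by
        rw [hlie, LinearMap.sum_apply, map_sum]
        exact Finset.sum_congr rfl fun i _ => (hterm i).symm
    _ ≤ B (T v) (T v) := by
        rw [bilinForm_apply_self_eq_add_lie hB.isSymm hT]
        exact le_add_of_nonneg_left (hB.nonneg _)

end CanonicalCommutation

section TestFunctions

open TopologicalSpace LineDeriv
open scoped ContDiff Distributions

variable {E : Type*} [NormedAddCommGroup E] [NormedSpace ℝ E] {Ω : Opens E} {φ g : E → ℝ}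

theorem contDiff_fderiv_apply_const (hg : ContDiff ℝ ∞ g) (v : E) :
    ContDiff ℝ ∞ fun x => fderiv ℝ g x v :=
  (hg.fderiv_right (by simp)).clm_apply contDiff_const

theorem fderiv_fderiv_apply_comm (hg : ContDiff ℝ ∞ g) (v w x : E) :
    fderiv ℝ (fun y => fderiv ℝ g y w) x v = fderiv ℝ (fun y => fderiv ℝ g y v) x w := by
  have hsymm : IsSymmSndFDerivAt ℝ g x :=
    hg.contDiffAt.isSymmSndFDerivAt <| by
      rw [minSmoothness_of_isRCLikeNormedField]
      exact WithTop.coe_le_coe.2 le_top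
  have hfderiv : DifferentiableAt ℝ (fderiv ℝ g) x :=
    (hg.fderiv_right (m := ∞) (by simp)).differentiable (by simp) x
  simpa [fderiv_clm_apply hfderiv (differentiableAt_const _)] using hsymm v w

variable (Ω) in
/-- The directional derivative `∂_v` as an element of the (noncommutative) ring of linear
endomorphisms of the space of test functions, where commutators can be formed. -/
noncomputable def testDeriv (v : E) : Module.End ℝ 𝓓(Ω, ℝ) :=
  (lineDerivOpCLM ℝ 𝓓(Ω, ℝ) v).toLinearMap

variable (Ω) in
/-- Multiplication by a smooth function as an endomorphism of the space of test functions. The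
factor need not be bounded, so that Gaussian weights are allowed. -/
noncomputable def testMul (hg : ContDiff ℝ ∞ g) : Module.End ℝ 𝓓(Ω, ℝ) where
  toFun ψ := ⟨fun x => g x * ψ x, hg.mul ψ.contDiff, ψ.hasCompactSupport.mul_left,
    tsupport_mul_subset_right.trans ψ.tsupport_subset⟩
  map_add' ψ χ := by ext x; exact mul_add _ _ _
  map_smul' r ψ := by ext x; exact mul_left_comm _ _ _

theorem testMul_apply (hg : ContDiff ℝ ∞ g) (ψ : 𝓓(Ω, ℝ)) (x : E) :
    testMul Ω hg ψ x = g x * ψ x :=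
  rfl

theorem differentiable_testFunction (ψ : 𝓓(Ω, ℝ)) : Differentiable ℝ ψ :=
  ψ.contDiff.differentiable (by simp)

theorem testDeriv_apply (v : E) (ψ : 𝓓(Ω, ℝ)) (x : E) : testDeriv Ω v ψ x = fderiv ℝ ψ x v := by
  rw [← (differentiable_testFunction ψ x).lineDeriv_eq_fderiv]
  exact TestFunction.lineDerivCLM_apply_of_le (by simp)

theorem commute_testDeriv (v w : E) : Commute (testDeriv Ω v) (testDeriv Ω w) := by
  ext ψ x
  simp only [Module.End.mul_apply, testDeriv_apply, funext (testDeriv_apply _ ψ)]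
  exact fderiv_fderiv_apply_comm ψ.contDiff v w x

theorem testDeriv_testMul_apply (hg : ContDiff ℝ ∞ g) (v : E) (ψ : 𝓓(Ω, ℝ)) (x : E) :
    testDeriv Ω v (testMul Ω hg ψ) x = g x * testDeriv Ω v ψ x + fderiv ℝ g x v * ψ x := by
  rw [testDeriv_apply, testDeriv_apply, funext (testMul_apply hg ψ),
    fderiv_fun_mul (hg.differentiable (by simp) x) (differentiable_testFunction ψ x)]
  simp [mul_comm]

theorem lie_testDeriv_testMul (hg : ContDiff ℝ ∞ g) (v : E) :
    ⁅testDeriv Ω v, testMul Ω hg⁆ = testMul Ω (contDiff_fderiv_apply_const hg v) := by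
  ext ψ x
  simp [Ring.lie_def, testDeriv_testMul_apply, testMul_apply]

variable (Ω) in
/-- The formal adjoint `-∂_v - (∂_v φ)` of `∂_v` with respect to the weight `exp φ`. -/
noncomputable def weightedAdjoint (hφ : ContDiff ℝ ∞ φ) (v : E) : Module.End ℝ 𝓓(Ω, ℝ) :=
  -testDeriv Ω v - testMul Ω (contDiff_fderiv_apply_const hφ v)

theorem lie_weightedAdjoint_testDeriv (hφ : ContDiff ℝ ∞ φ) (v w : E) :
    ⁅weightedAdjoint Ω hφ v, testDeriv Ω w⁆ =
      testMul Ω (contDiff_fderiv_apply_const (contDiff_fderiv_apply_const hφ v) w) := by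
  rw [← lie_testDeriv_testMul (contDiff_fderiv_apply_const hφ v), weightedAdjoint, Ring.lie_def,
    Ring.lie_def, sub_mul, mul_sub, neg_mul, mul_neg, (commute_testDeriv v w).eq]
  abel

variable [MeasurableSpace E] [BorelSpace E] [FiniteDimensional ℝ E] {μ : Measure E}
  [μ.IsAddHaarMeasure]

theorem integral_testDeriv_mul (v : E) (ψ χ : 𝓓(Ω, ℝ)) :
    ∫ x, testDeriv Ω v ψ x * χ x ∂μ = -∫ x, ψ x * testDeriv Ω v χ x ∂μ := by
  have hint : ∀ ψ χ : 𝓓(Ω, ℝ), Integrable (fun x => ψ x * χ x) μ := fun ψ χ =>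
    (ψ.continuous.mul χ.continuous).integrable_of_hasCompactSupport χ.hasCompactSupport.mul_left
  have hψ := hint (testDeriv Ω v ψ) χ
  have hχ := hint ψ (testDeriv Ω v χ)
  simp only [testDeriv_apply] at hψ hχ ⊢
  rw [integral_mul_fderiv_eq_neg_fderiv_mul_of_integrable hψ hχ (hint ψ χ)
    (fun x _ => differentiable_testFunction ψ x) fun x _ => differentiable_testFunction χ x,
    neg_neg]

theorem integral_exp_mul_testDeriv_mul (hφ : ContDiff ℝ ∞ φ) (v : E) (ψ χ : 𝓓(Ω, ℝ)) :
    ∫ x, exp (φ x) * (testDeriv Ω v ψ x * χ x) ∂μ =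
      ∫ x, exp (φ x) * (ψ x * weightedAdjoint Ω hφ v χ x) ∂μ := by
  have hderiv : ∀ x, testDeriv Ω v (testMul Ω hφ.exp χ) x =
      -(exp (φ x) * weightedAdjoint Ω hφ v χ x) := fun x => by
    rw [testDeriv_testMul_apply, fderiv_exp (hφ.differentiable (by simp) x)]
    simp [weightedAdjoint, testMul_apply]
    ring
  calc ∫ x, exp (φ x) * (testDeriv Ω v ψ x * χ x) ∂μ
      = ∫ x, testDeriv Ω v ψ x * testMul Ω hφ.exp χ x ∂μ := by
        simp only [testMul_apply, mul_left_comm]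
    _ = -∫ x, ψ x * testDeriv Ω v (testMul Ω hφ.exp χ) x ∂μ := integral_testDeriv_mul v ψ _
    _ = ∫ x, exp (φ x) * (ψ x * weightedAdjoint Ω hφ v χ x) ∂μ := by
        rw [← integral_neg]
        simp only [hderiv, mul_neg, neg_neg, mul_left_comm]

end TestFunctions

section Duality

variable {𝕜 V H G : Type*} [RCLike 𝕜] [AddCommGroup V] [Module 𝕜 V]
  [NormedAddCommGroup H] [InnerProductSpace 𝕜 H] [CompleteSpace H]
  [NormedAddCommGroup G] [CompleteSpace G] {C : ℝ}

theorem exists_clm_comp_eq_of_norm_le [NormedSpace 𝕜 G] {T : V →ₗ[𝕜] H} {J : V →ₗ[𝕜] G}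
    (hC : 0 ≤ C) (h : ∀ v, ‖J v‖ ≤ C * ‖T v‖) : ∃ S : H →L[𝕜] G, ‖S‖ ≤ C ∧ ∀ v, S (T v) = J v := by
  let K := (LinearMap.range T).topologicalClosure
  let e : V →ₗ[𝕜] K := T.codRestrict K fun v =>
    (LinearMap.range T).le_topologicalClosure (LinearMap.mem_range_self T v)
  have he : DenseRange e :=
    (denseRange_inclusion_iff (LinearMap.range T).le_topologicalClosure).2 subset_rfl |>.comp
      T.surjective_rangeRestrict.denseRange (continuous_inclusion _)
  have hJe : ∀ v, ‖J v‖ ≤ C * ‖e v‖ := h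
  have : CompleteSpace K := (LinearMap.range T).isClosed_topologicalClosure.completeSpace_coe
  refine ⟨J.extendOfNorm e ∘L K.orthogonalProjectionOnto, ?_, fun v => ?_⟩
  · calc ‖J.extendOfNorm e ∘L K.orthogonalProjectionOnto‖
        ≤ ‖J.extendOfNorm e‖ * ‖K.orthogonalProjectionOnto‖ :=
          ContinuousLinearMap.opNorm_comp_le _ _
      _ ≤ C * 1 := by
        gcongr
        · exact LinearMap.opNorm_extendOfNorm_le he hC hJe
        · exact K.orthogonalProjectionOnto_norm_le
      _ = C := mul_one C
  · have hproj : K.orthogonalProjectionOnto (T v) = e v :=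
      K.orthogonalProjectionOnto_mem_subspace_eq_self (e v)
    rw [ContinuousLinearMap.comp_apply, hproj, LinearMap.extendOfNorm_eq he ⟨C, hJe⟩]

theorem exists_inner_eq_of_norm_le [InnerProductSpace 𝕜 G] {T : V →ₗ[𝕜] H} {J : V →ₗ[𝕜] G}
    (hC : 0 ≤ C) (h : ∀ v, ‖J v‖ ≤ C * ‖T v‖) (g : G) :
    ∃ U : H, ‖U‖ ≤ C * ‖g‖ ∧ ∀ v, inner 𝕜 U (T v) = inner 𝕜 g (J v) := by
  obtain ⟨S, hS, hST⟩ := exists_clm_comp_eq_of_norm_le hC h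
  refine ⟨ContinuousLinearMap.adjoint S g, ?_, fun v => ?_⟩
  · exact ContinuousLinearMap.le_of_opNorm_le _ (by rwa [LinearIsometryEquiv.norm_map]) g
  · rw [ContinuousLinearMap.adjoint_inner_left, hST]

end Duality

section WeightedSpace

open TopologicalSpace
open scoped ContDiff Distributions

theorem norm_sq_eq_integral_sq {α : Type*} [MeasurableSpace α] {μ : Measure α} (U : Lp ℝ 2 μ) :
    ‖U‖ ^ 2 = ∫ x, U x ^ 2 ∂μ := by
  rw [← real_inner_self_eq_norm_sq, L2.inner_def]
  simp only [real_inner_self_eq_norm_sq, norm_eq_abs, sq_abs]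

variable {E : Type*} [NormedAddCommGroup E] [NormedSpace ℝ E] {Ω : Opens E} [MeasurableSpace E]
  [BorelSpace E] {μ : Measure E} [IsFiniteMeasureOnCompacts μ] {ρ : E → ℝ}

theorem memLp_mul_testFunction (hρ : Continuous ρ) (ψ : 𝓓(Ω, ℝ)) :
    MemLp (fun x => ρ x * ψ x) 2 μ :=
  (hρ.mul ψ.continuous).memLp_of_hasCompactSupport ψ.hasCompactSupport.mul_left

variable (Ω μ) in
/-- The map `ψ ↦ ρ ψ` from test functions to `L²(μ)`. It is isometric for the norm of `L²(ρ² μ)`,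
which lets weighted spaces be handled through the single Hilbert space `Lp ℝ 2 μ`. -/
noncomputable def weightedToL2 (hρ : Continuous ρ) : 𝓓(Ω, ℝ) →ₗ[ℝ] Lp ℝ 2 μ where
  toFun ψ := (memLp_mul_testFunction hρ ψ).toLp _
  map_add' ψ χ := by
    rw [← MemLp.toLp_add]
    congr 1
    ext x
    exact mul_add _ _ _
  map_smul' r ψ := by
    rw [RingHom.id_apply, ← MemLp.toLp_const_smul]
    congr 1
    ext x
    exact mul_left_comm _ _ _

theorem weightedToL2_coeFn (hρ : Continuous ρ) (ψ : 𝓓(Ω, ℝ)) :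
    weightedToL2 Ω μ hρ ψ =ᵐ[μ] fun x => ρ x * ψ x :=
  (memLp_mul_testFunction hρ ψ).coeFn_toLp

theorem inner_weightedToL2 (hρ : Continuous ρ) (U : Lp ℝ 2 μ) (ψ : 𝓓(Ω, ℝ)) :
    inner ℝ U (weightedToL2 Ω μ hρ ψ) = ∫ x, ρ x * U x * ψ x ∂μ := by
  rw [L2.inner_def]
  refine integral_congr_ae ?_
  filter_upwards [weightedToL2_coeFn hρ ψ] with x hx
  rw [hx, RCLike.inner_apply, conj_trivial]
  ring

variable (Ω μ) in
/-- The inner product of `L²(ρ² μ)` as a bilinear form on test functions, in which the a priori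
estimate is stated. -/
noncomputable def weightedForm (hρ : Continuous ρ) : LinearMap.BilinForm ℝ 𝓓(Ω, ℝ) :=
  (innerₗ (Lp ℝ 2 μ)).compl₁₂ (weightedToL2 Ω μ hρ) (weightedToL2 Ω μ hρ)

theorem weightedForm_apply (hρ : Continuous ρ) (ψ χ : 𝓓(Ω, ℝ)) :
    weightedForm Ω μ hρ ψ χ = ∫ x, ρ x ^ 2 * (ψ x * χ x) ∂μ := by
  refine (inner_weightedToL2 hρ (weightedToL2 Ω μ hρ ψ) χ).trans (integral_congr_ae ?_)
  filter_upwards [weightedToL2_coeFn hρ ψ] with x hx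
  rw [hx]
  ring

theorem weightedForm_apply_self (hρ : Continuous ρ) (ψ : 𝓓(Ω, ℝ)) :
    weightedForm Ω μ hρ ψ ψ = ‖weightedToL2 Ω μ hρ ψ‖ ^ 2 :=
  real_inner_self_eq_norm_sq (weightedToL2 Ω μ hρ ψ)

theorem isPosSemidef_weightedForm (hρ : Continuous ρ) : (weightedForm Ω μ hρ).IsPosSemidef where
  eq ψ χ := by simp only [weightedForm_apply, mul_comm]
  nonneg ψ := real_inner_self_nonneg (x := weightedToL2 Ω μ hρ ψ)

theorem continuous_exp_half {E : Type*} [TopologicalSpace E] {φ : E → ℝ} (hφ : Continuous φ) :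
    Continuous fun x => exp (φ x / 2) :=
  (hφ.div_const 2).rexp

theorem isAdjointPair_testDeriv_weightedAdjoint [FiniteDimensional ℝ E] {μ : Measure E}
    [μ.IsAddHaarMeasure] {φ : E → ℝ} (hφ : ContDiff ℝ ∞ φ) (v : E) :
    (weightedForm Ω μ (continuous_exp_half hφ.continuous)).IsAdjointPair
      (weightedForm Ω μ (continuous_exp_half hφ.continuous))
      (testDeriv Ω v) (weightedAdjoint Ω hφ v) := fun ψ χ => by
  simp only [weightedForm_apply, ← exp_nat_mul, Nat.cast_ofNat, mul_div_cancel₀, ne_eq,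
    OfNat.ofNat_ne_zero, not_false_eq_true]
  exact integral_exp_mul_testDeriv_mul hφ v ψ χ

theorem exists_weak_solution_of_le_weightedForm [ProperSpace E] (hρ : Continuous ρ)
    (hρ0 : ∀ x, ρ x ≠ 0) {P : Module.End ℝ 𝓓(Ω, ℝ)} {κ : ℝ} (hκ : 0 < κ)
    (hP : ∀ ψ, κ * weightedForm Ω μ hρ ψ ψ ≤ weightedForm Ω μ hρ (P ψ) (P ψ))
    {f : E → ℝ} (hf : MemLp (fun x => (ρ x)⁻¹ * f x) 2 μ) :
    ∃ u : E → ℝ, LocallyIntegrable u μ ∧ MemLp (fun x => (ρ x)⁻¹ * u x) 2 μ ∧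
      (∀ ψ : 𝓓(Ω, ℝ), ∫ x, u x * P ψ x ∂μ = ∫ x, f x * ψ x ∂μ) ∧
      ∫ x, ((ρ x)⁻¹ * u x) ^ 2 ∂μ ≤ κ⁻¹ * ∫ x, ((ρ x)⁻¹ * f x) ^ 2 ∂μ := by
  let J := weightedToL2 Ω μ hρ
  have hJ : ∀ ψ, ‖J ψ‖ ≤ (√κ)⁻¹ * ‖(J ∘ₗ P) ψ‖ := fun ψ => by
    rw [← div_eq_inv_mul, le_div_iff₀ (sqrt_pos.2 hκ)]
    refine le_of_sq_le_sq ?_ (norm_nonneg _)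
    rw [mul_pow, sq_sqrt hκ.le, mul_comm]
    simpa only [weightedForm_apply_self, J, LinearMap.comp_apply] using hP ψ
  obtain ⟨U, hU, hUJ⟩ := exists_inner_eq_of_norm_le (by positivity) hJ (hf.toLp _)
  have hcancel : ∀ x, (ρ x)⁻¹ * (ρ x * U x) = U x := fun x => inv_mul_cancel_left₀ (hρ0 x) _
  refine ⟨fun x => ρ x * U x, ?_, ?_, fun ψ => ?_, ?_⟩
  · have hloc : LocallyIntegrable U μ := (Lp.memLp U).locallyIntegrable (by norm_num)
    simpa only [locallyIntegrableOn_univ] using (hloc.locallyIntegrableOn Set.univ).continuousOn_mul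
      hρ.continuousOn isOpen_univ.isLocallyClosed
  · simpa only [hcancel] using Lp.memLp U
  · calc ∫ x, ρ x * U x * P ψ x ∂μ = inner ℝ (hf.toLp _) (J ψ) := by
          rw [← hUJ]
          exact (inner_weightedToL2 hρ U (P ψ)).symm
      _ = ∫ x, f x * ψ x ∂μ := by
          rw [inner_weightedToL2]
          refine integral_congr_ae ?_
          filter_upwards [hf.coeFn_toLp] with x hx
          rw [hx, mul_inv_cancel_left₀ (hρ0 x)]
  · calc ∫ x, ((ρ x)⁻¹ * (ρ x * U x)) ^ 2 ∂μ = ‖U‖ ^ 2 := by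
          simp only [hcancel, norm_sq_eq_integral_sq]
      _ ≤ ((√κ)⁻¹ * ‖hf.toLp _‖) ^ 2 := by gcongr
      _ = κ⁻¹ * ‖hf.toLp _‖ ^ 2 := by rw [mul_pow, inv_pow, sq_sqrt hκ.le]
      _ = κ⁻¹ * ∫ x, ((ρ x)⁻¹ * f x) ^ 2 ∂μ := by
          rw [norm_sq_eq_integral_sq]
          congr 1
          refine integral_congr_ae ?_
          filter_upwards [hf.coeFn_toLp] with x hx
          rw [hx]

end WeightedSpace

section GaussianWeight

open scoped ContDiff

variable {ι : Type*} [Fintype ι] {c : ι → ℝ}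

/-- The diagonal quadratic form with coefficients `c`, the exponent of the Gaussian weights. -/
noncomputable def diagForm (c : ι → ℝ) (x : EuclideanSpace ℝ ι) : ℝ :=
  ∑ i, c i * x i ^ 2

theorem contDiff_diagForm (c : ι → ℝ) : ContDiff ℝ ∞ (diagForm c) :=
  ContDiff.sum fun i _ => contDiff_const.mul ((EuclideanSpace.proj (𝕜 := ℝ) i).contDiff.pow 2)

theorem hasFDerivAt_diagForm (c : ι → ℝ) (x : EuclideanSpace ℝ ι) :
    HasFDerivAt (diagForm c) (∑ i, (2 * c i * x i) • EuclideanSpace.proj (𝕜 := ℝ) i) x := by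
  refine HasFDerivAt.fun_sum fun i _ => ?_
  refine (((EuclideanSpace.proj (𝕜 := ℝ) i).hasFDerivAt.pow 2).const_mul (c i)).congr_fderiv ?_
  ext y
  simp
  ring

variable [DecidableEq ι]

theorem lie_weightedAdjoint_diagForm_single (Ω : TopologicalSpace.Opens (EuclideanSpace ℝ ι))
    (i j : ι) :
    ⁅weightedAdjoint Ω (contDiff_diagForm c) (EuclideanSpace.single i 1),
      testDeriv Ω (EuclideanSpace.single j 1)⁆ = if i = j then (2 * c i) • 1 else 0 := by
  have hfirst : ∀ x, fderiv ℝ (diagForm c) x (EuclideanSpace.single i 1) = 2 * c i * x i :=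
    fun x => by simp [(hasFDerivAt_diagForm c x).fderiv]
  have hsecond : ∀ x, HasFDerivAt (fun y : EuclideanSpace ℝ ι => 2 * c i * y i)
      ((2 * c i) • EuclideanSpace.proj (𝕜 := ℝ) i) x :=
    fun x => (EuclideanSpace.proj (𝕜 := ℝ) i).hasFDerivAt.const_mul (2 * c i)
  ext ψ x
  rw [lie_weightedAdjoint_testDeriv, testMul_apply, funext hfirst, (hsecond x).fderiv]
  split_ifs with hij <;> simp [hij]

end GaussianWeight

section Laplacian

open TopologicalSpace
open scoped Distributions

variable {n : ℕ} {Ω : Opens (EuclideanSpace ℝ (Fin n))}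

variable (Ω) in
/-- The operator `Δ + a` on test functions, written through the `∂ᵢ` so that the commutation
relations apply to it. -/
noncomputable def testHelmholtz (a : ℝ) : Module.End ℝ 𝓓(Ω, ℝ) :=
  ∑ i, testDeriv Ω (EuclideanSpace.single i 1) ^ 2 + algebraMap ℝ _ a

theorem testHelmholtz_apply (a : ℝ) (ψ : 𝓓(Ω, ℝ)) (x : EuclideanSpace ℝ (Fin n)) :
    testHelmholtz Ω a ψ x = lap ψ x + a * ψ x := by
  simp [testHelmholtz, lap, sq, testDeriv_apply, funext (testDeriv_apply _ ψ)]

theorem mul_weightedForm_le_testHelmholtz {c : Fin n → ℝ} (hc : ∀ i, 0 ≤ c i) (a : ℝ)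
    (ψ : 𝓓(Ω, ℝ)) :
    8 * (∑ i, c i ^ 2) *
        weightedForm Ω volume (continuous_exp_half (contDiff_diagForm c).continuous) ψ ψ ≤
      weightedForm Ω volume (continuous_exp_half (contDiff_diagForm c).continuous)
        (testHelmholtz Ω a ψ) (testHelmholtz Ω a ψ) := by
  have hsum : 8 * ∑ i, c i ^ 2 = 2 * ∑ i, (2 * c i) ^ 2 := by
    simp only [mul_pow, ← Finset.mul_sum]
    ring
  rw [hsum]
  exact sum_sq_mul_le_of_canonical_commutation (isPosSemidef_weightedForm _)
    (fun i => isAdjointPair_testDeriv_weightedAdjoint (contDiff_diagForm c) _)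
    (fun i => mul_nonneg zero_le_two (hc i)) (lie_weightedAdjoint_diagForm_single Ω) a ψ

end Laplacian

theorem stmt0_general (n : ℕ) (c : Fin n → ℝ) (hc : ∀ i, 0 ≤ c i) (hc0 : c ≠ 0) (a : ℝ)
    (f : EuclideanSpace ℝ (Fin n) → ℝ) (hf : AEStronglyMeasurable f volume)
    (hf2 : Integrable (fun x => f x ^ 2 * Real.exp (-∑ i, c i * x i ^ 2)) volume) :
    ∃ u : EuclideanSpace ℝ (Fin n) → ℝ,
      LocallyIntegrable u volume ∧
      Integrable (fun x => u x ^ 2 * Real.exp (-∑ i, c i * x i ^ 2)) volume ∧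
      IsWeakSolution a u f ∧
      ∫ x, u x ^ 2 * Real.exp (-∑ i, c i * x i ^ 2) ≤
        (1 / (8 * ∑ i, c i ^ 2)) * ∫ x, f x ^ 2 * Real.exp (-∑ i, c i * x i ^ 2) := by
  have hρ := continuous_exp_half (contDiff_diagForm c).continuous
  have hsq : ∀ (g : EuclideanSpace ℝ (Fin n) → ℝ) x,
      ((exp (diagForm c x / 2))⁻¹ * g x) ^ 2 = g x ^ 2 * exp (-∑ i, c i * x i ^ 2) := fun g x => by
    rw [mul_pow, ← exp_neg, ← exp_nat_mul, mul_comm, diagForm]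
    ring_nf
  have hκ : 0 < 8 * ∑ i, c i ^ 2 := by
    obtain ⟨i, hi⟩ := Function.ne_iff.1 hc0
    exact mul_pos (by norm_num) (Finset.sum_pos' (fun j _ => sq_nonneg (c j))
      ⟨i, Finset.mem_univ i, pow_pos ((hc i).lt_of_ne' hi) 2⟩)
  have hmeas : AEStronglyMeasurable (fun x => (exp (diagForm c x / 2))⁻¹ * f x) volume :=
    (hρ.inv₀ fun x => (exp_pos _).ne').aestronglyMeasurable.mul hf
  simp only [← hsq] at hf2 ⊢
  obtain ⟨u, hu, hu2, hweak, hle⟩ := exists_weak_solution_of_le_weightedForm hρ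
    (fun x => (exp_pos _).ne') hκ (mul_weightedForm_le_testHelmholtz (Ω := ⊤) hc a)
    ((memLp_two_iff_integrable_sq hmeas).2 hf2)
  refine ⟨u, hu, hu2.integrable_sq, fun ψ hψ hψ' => ?_, by rwa [one_div]⟩
  simpa only [testHelmholtz_apply] using! hweak ⟨ψ, hψ, hψ', Set.subset_univ _⟩

theorem stmt0 (n : ℕ) (hn : 0 < n) (a : ℝ) (f : EuclideanSpace ℝ (Fin n) → ℝ)
    (hf : LocallyIntegrable f volume)
    (hf2 : Integrable (fun x => f x ^ 2 * Real.exp (-‖x‖ ^ 2)) volume) :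
    ∃ u : EuclideanSpace ℝ (Fin n) → ℝ,
      LocallyIntegrable u volume ∧
      Integrable (fun x => u x ^ 2 * Real.exp (-‖x‖ ^ 2)) volume ∧
      IsWeakSolution a u f ∧
      ∫ x, u x ^ 2 * Real.exp (-‖x‖ ^ 2) ≤
        (1 / (8 * n)) * ∫ x, f x ^ 2 * Real.exp (-‖x‖ ^ 2) := by
  simpa [EuclideanSpace.real_norm_sq_eq] using
    stmt0_general n 1 (fun _ => zero_le_one) (Function.ne_iff.2 ⟨⟨0, hn⟩, one_ne_zero⟩) a f
      hf.aestronglyMeasurable (by simpa [EuclideanSpace.real_norm_sq_eq] using hf2)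
end

section
/- Let λ > 0, x₀ ∈ ℝⁿ, a ∈ ℝ. For every f ∈ L²(ℝⁿ, e^{-λ|x−x₀|²}) there exists a weak solution u ∈ L²(ℝⁿ, e^{-λ|x−x₀|²}) of Δu + au = f satisfying ∫ u² e^{-λ|x−x₀|²} dx ≤ (1/(8nλ²)) ∫ f² e^{-λ|x−x₀|²} dx. -/
open MeasureTheory Real

open scoped InnerProductSpace Gradient Laplacian ContDiff Distributions
open Module (finrank)
open TopologicalSpace (Opens)

/-! Conjugating `Δ + a` by the Gaussian `exp (λ|x - x₀|² / 2)` turns it into `H - λB`, where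
`H = Δ + λ²|x - x₀|² + a` is symmetric and `B = 2 (x - x₀) · ∇ + n` is antisymmetric. Pointwise
`(Hv - λBv)² ≥ -4λ Hv Bv`, and the commutator of `H` and `B` gives
`-∫ Hv Bv = 2 (∫ |∇v|² + λ² ∫ |x - x₀|² v²)`, which is at least `2nλ ∫ v²` by the uncertainty
principle. Hence `8nλ² ∫ p² e^{λ|x - x₀|²} ≤ ∫ (Δp + ap)² e^{λ|x - x₀|²}` for every test
function `p`, and Hahn-Banach and Riesz representation convert this estimate into solvability, with
the same constant, in the space with the dual weight `e^{-λ|x - x₀|²}`. -/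

section Duality

theorem exists_inner_eq_of_norm_le_s11 {𝕜 V H G : Type*} [RCLike 𝕜] [AddCommGroup V] [Module 𝕜 V]
    [NormedAddCommGroup H] [InnerProductSpace 𝕜 H] [CompleteSpace H]
    [NormedAddCommGroup G] [InnerProductSpace 𝕜 G] {S : V →ₗ[𝕜] G} {T : V →ₗ[𝕜] H} {c : ℝ}
    (hc : 0 < c) (hST : ∀ v, c * ‖S v‖ ≤ ‖T v‖) (g : G) :
    ∃ u : H, c * ‖u‖ ≤ ‖g‖ ∧ ∀ v, ⟪u, T v⟫_𝕜 = ⟪g, S v⟫_𝕜 := by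
  let L : V →ₗ[𝕜] 𝕜 := (innerSL 𝕜 g).toLinearMap ∘ₗ S
  have hL (v : V) : ‖L v‖ ≤ ‖g‖ / c * ‖T v‖ := calc
    ‖L v‖ ≤ ‖g‖ * ‖S v‖ := norm_inner_le_norm g (S v)
    _ = ‖g‖ / c * (c * ‖S v‖) := by field_simp
    _ ≤ ‖g‖ / c * ‖T v‖ := by gcongr; exact hST v
  obtain ⟨ℓ, hℓ, hℓ_norm⟩ := exists_extension_norm_eq _ (L.compLeftInverse T)
  have hℓ_le : ‖ℓ‖ ≤ ‖g‖ / c := by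
    refine hℓ_norm ▸ ContinuousLinearMap.opNorm_le_bound _ (by positivity) ?_
    rintro ⟨_, v, rfl⟩
    rw [L.compLeftInverse_apply_of_bdd T ⟨_, hL⟩ v _ rfl]
    exact hL v
  refine ⟨(InnerProductSpace.toDual 𝕜 H).symm ℓ, ?_, fun v => ?_⟩
  · rwa [LinearIsometryEquiv.norm_map, mul_comm, ← le_div_iff₀ hc]
  · rw [InnerProductSpace.toDual_symm_apply, hℓ ⟨T v, v, rfl⟩,
      L.compLeftInverse_apply_of_bdd T ⟨_, hL⟩ v _ rfl]
    rfl

variable {α : Type*} [MeasurableSpace α] {μ : Measure α}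

theorem inner_toLp_two {f g : α → ℝ} (hf : MemLp f 2 μ) (hg : MemLp g 2 μ) :
    ⟪hf.toLp f, hg.toLp g⟫_ℝ = ∫ x, f x * g x ∂μ := by
  rw [L2.inner_def]
  refine integral_congr_ae ?_
  filter_upwards [hf.coeFn_toLp, hg.coeFn_toLp] with x hfx hgx
  rw [hfx, hgx, RCLike.inner_apply, conj_trivial, mul_comm]

theorem norm_toLp_two_sq {f : α → ℝ} (hf : MemLp f 2 μ) :
    ‖hf.toLp f‖ ^ 2 = ∫ x, f x ^ 2 ∂μ := by
  simp_rw [← real_inner_self_eq_norm_sq, inner_toLp_two, sq]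

theorem neg_four_mul_integral_mul_le {f g : α → ℝ} (hf : MemLp f 2 μ) (hg : MemLp g 2 μ) (c : ℝ) :
    -(4 * c * ∫ x, f x * g x ∂μ) ≤ ∫ x, (f x - c * g x) ^ 2 ∂μ := by
  rw [← neg_mul, ← integral_const_mul]
  refine integral_mono ((hf.integrable_mul hg).const_mul _) (hf.sub (hg.const_mul c)).integrable_sq
    fun x => ?_
  linarith [sq_nonneg (f x + c * g x)]

/-- A linear map into functions, all of whose values lie in `L^p`, as a linear map into the
space `Lp` of classes; it turns a differential operator on test functions into an operator between
Hilbert spaces. -/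
noncomputable def toLpLinearMap {V : Type*} [AddCommGroup V] [Module ℝ V] {p : ENNReal}
    (A : V →ₗ[ℝ] α → ℝ) (hA : ∀ v, MemLp (A v) p μ) : V →ₗ[ℝ] Lp ℝ p μ where
  toFun v := (hA v).toLp (A v)
  map_add' v w := by
    rw [← MemLp.toLp_add]
    exact MemLp.toLp_congr _ _ (.of_forall fun x => by rw [map_add])
  map_smul' c v := by
    rw [RingHom.id_apply, ← MemLp.toLp_const_smul]
    exact MemLp.toLp_congr _ _ (.of_forall fun x => by rw [map_smul])

theorem exists_memLp_two_integral_mul_eq {V : Type*} [AddCommGroup V] [Module ℝ V]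
    {S T : V →ₗ[ℝ] α → ℝ} (hS : ∀ v, MemLp (S v) 2 μ) (hT : ∀ v, MemLp (T v) 2 μ)
    {K : ℝ} (hK : 0 < K) (hST : ∀ v, K * ∫ x, S v x ^ 2 ∂μ ≤ ∫ x, T v x ^ 2 ∂μ)
    {g : α → ℝ} (hg : MemLp g 2 μ) :
    ∃ u : α → ℝ, MemLp u 2 μ ∧ K * ∫ x, u x ^ 2 ∂μ ≤ ∫ x, g x ^ 2 ∂μ ∧
      ∀ v, ∫ x, u x * T v x ∂μ = ∫ x, g x * S v x ∂μ := by
  have le_iff_sq {r s : ℝ} (hr : 0 ≤ r) (hs : 0 ≤ s) : √K * r ≤ s ↔ K * r ^ 2 ≤ s ^ 2 := by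
    rw [← pow_le_pow_iff_left₀ (by positivity) hs two_ne_zero, mul_pow, sq_sqrt hK.le]
  obtain ⟨u, hu_norm, hu⟩ := exists_inner_eq_of_norm_le_s11 (S := toLpLinearMap S hS)
    (T := toLpLinearMap T hT) (sqrt_pos.2 hK) (fun v => by
      rw [le_iff_sq (norm_nonneg _) (norm_nonneg _)]
      simpa only [toLpLinearMap, LinearMap.coe_mk, AddHom.coe_mk, norm_toLp_two_sq] using hST v)
    (hg.toLp g)
  have hu_toLp : (Lp.memLp u).toLp u = u := Lp.toLp_coeFn u _
  refine ⟨u, Lp.memLp u, ?_, fun v => ?_⟩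
  · rwa [le_iff_sq (norm_nonneg _) (norm_nonneg _), ← hu_toLp, norm_toLp_two_sq,
      norm_toLp_two_sq] at hu_norm
  · rw [← inner_toLp_two (Lp.memLp u) (hT v), ← inner_toLp_two hg (hS v), hu_toLp]
    exact hu v

theorem exists_memLp_two_div_integral_mul_eq {V : Type*} [AddCommGroup V] [Module ℝ V]
    {J P : V →ₗ[ℝ] α → ℝ} {w : α → ℝ} (hw : ∀ x, w x ≠ 0)
    (hJ : ∀ v, MemLp (fun x => w x * J v x) 2 μ)
    (hP : ∀ v, MemLp (fun x => w x * P v x) 2 μ) {K : ℝ} (hK : 0 < K)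
    (hJP : ∀ v, K * ∫ x, (w x * J v x) ^ 2 ∂μ ≤ ∫ x, (w x * P v x) ^ 2 ∂μ)
    {f : α → ℝ} (hf : MemLp (fun x => f x / w x) 2 μ) :
    ∃ u : α → ℝ, MemLp (fun x => u x / w x) 2 μ ∧
      K * ∫ x, (u x / w x) ^ 2 ∂μ ≤ ∫ x, (f x / w x) ^ 2 ∂μ ∧
      ∀ v, ∫ x, u x * P v x ∂μ = ∫ x, f x * J v x ∂μ := by
  obtain ⟨U, hU, hU_le, hU_eq⟩ := exists_memLp_two_integral_mul_eq
    (S := LinearMap.mulLeft ℝ w ∘ₗ J) (T := LinearMap.mulLeft ℝ w ∘ₗ P) hJ hP hK hJP hf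
  refine ⟨fun x => w x * U x, ?_, ?_, fun v => ?_⟩
  · simpa only [mul_div_cancel_left₀ _ (hw _)] using hU
  · simpa only [mul_div_cancel_left₀ _ (hw _)] using hU_le
  · calc ∫ x, w x * U x * P v x ∂μ
        = ∫ x, U x * (w x * P v x) ∂μ := by simp only [mul_left_comm, mul_assoc]
      _ = ∫ x, f x / w x * (w x * J v x) ∂μ := hU_eq v
      _ = ∫ x, f x * J v x ∂μ := by simp only [← mul_assoc, div_mul_cancel₀ _ (hw _)]

theorem locallyIntegrable_of_memLp_div {X : Type*} [TopologicalSpace X] [LocallyCompactSpace X]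
    [T2Space X] [MeasurableSpace X] [BorelSpace X] {μ : Measure X} [IsLocallyFiniteMeasure μ]
    {u w : X → ℝ} {p : ENNReal} (hu : MemLp (fun x => u x / w x) p μ) (hp : 1 ≤ p)
    (hw : Continuous w) (hw_ne : ∀ x, w x ≠ 0) : LocallyIntegrable u μ := by
  simpa only [smul_eq_mul, mul_div_cancel₀ _ (hw_ne _)] using
    (hu.locallyIntegrable hp).continuous_smul hw

end Duality

section Divergence

variable {E : Type*} [NormedAddCommGroup E] [NormedSpace ℝ E]

theorem hasCompactSupport_fderiv_apply {f : E → ℝ} (hf : HasCompactSupport f) (F : E → E) :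
    HasCompactSupport fun x => fderiv ℝ f x (F x) :=
  (hf.fderiv ℝ).mono' fun x hx => subset_tsupport _ fun h => hx (by simp [h])

theorem integrable_fderiv_apply [MeasurableSpace E] [BorelSpace E] {μ : Measure E}
    [IsFiniteMeasureOnCompacts μ] {f : E → ℝ} {F : E → E} (hf : ContDiff ℝ 1 f)
    (hf_supp : HasCompactSupport f) (hF : Continuous F) :
    Integrable (fun x => fderiv ℝ f x (F x)) μ :=
  ((hf.continuous_fderiv one_ne_zero).clm_apply hF).integrable_of_hasCompactSupport
    (hasCompactSupport_fderiv_apply hf_supp F)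

/-- The divergence of a vector field, written without coordinates as the trace of its derivative. -/
noncomputable def divergence (F : E → E) (x : E) : ℝ :=
  LinearMap.trace ℝ E (fderiv ℝ F x)

theorem divergence_sub_const [FiniteDimensional ℝ E] (x₀ x : E) :
    divergence (fun y => y - x₀) x = finrank ℝ E := by
  rw [divergence, fderiv_sub_const, fderiv_fun_id, ContinuousLinearMap.coe_id, LinearMap.trace_id]

theorem divergence_add {F G : E → E} {x : E} (hF : DifferentiableAt ℝ F x)
    (hG : DifferentiableAt ℝ G x) :
    divergence (fun y => F y + G y) x = divergence F x + divergence G x := by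
  rw [divergence, fderiv_fun_add hF hG, ContinuousLinearMap.toLinearMap_add, map_add]
  rfl

theorem divergence_smul [FiniteDimensional ℝ E] {f : E → ℝ} {F : E → E} {x : E}
    (hf : DifferentiableAt ℝ f x) (hF : DifferentiableAt ℝ F x) :
    divergence (fun y => f y • F y) x = f x * divergence F x + fderiv ℝ f x (F x) := by
  rw [divergence, fderiv_fun_smul hf hF, ContinuousLinearMap.toLinearMap_add, map_add,
    ContinuousLinearMap.toLinearMap_smul, map_smul, smul_eq_mul]
  exact congrArg _ (LinearMap.trace_smulRight _ _)

end Divergence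

section Gradient

variable {E : Type*} [NormedAddCommGroup E] [InnerProductSpace ℝ E] [CompleteSpace E]

theorem contDiff_gradient {f : E → ℝ} {m n : ℕ∞ω} (hf : ContDiff ℝ n f) (hmn : m + 1 ≤ n) :
    ContDiff ℝ m (∇ f) :=
  (InnerProductSpace.toDual ℝ E).symm.contDiff.comp (hf.fderiv_right hmn)

theorem inner_fderiv_gradient {f : E → ℝ} (hf : ContDiff ℝ 2 f) (x v w : E) :
    ⟪fderiv ℝ (∇ f) x v, w⟫_ℝ = fderiv ℝ (fderiv ℝ f) x v w := by
  have hf' : DifferentiableAt ℝ (fderiv ℝ f) x :=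
    (hf.fderiv_right one_add_one_eq_two.le).differentiable one_ne_zero x
  have h_grad : DifferentiableAt ℝ (∇ f) x :=
    (contDiff_gradient hf one_add_one_eq_two.le).differentiable one_ne_zero x
  have h_inner : (fun y => ⟪∇ f y, w⟫_ℝ) = fun y => fderiv ℝ f y w :=
    funext fun y => inner_gradient_left
  calc ⟪fderiv ℝ (∇ f) x v, w⟫_ℝ = fderiv ℝ (fun y => ⟪∇ f y, w⟫_ℝ) x v := by
        rw [fderiv_inner_apply ℝ h_grad (differentiableAt_const w)]
        simp
    _ = fderiv ℝ (fderiv ℝ f) x v w := by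
        rw [h_inner, fderiv_clm_apply hf' (differentiableAt_const w)]
        simp

theorem gradient_mul {f g : E → ℝ} {x : E} (hf : DifferentiableAt ℝ f x)
    (hg : DifferentiableAt ℝ g x) :
    ∇ (fun y => f y * g y) x = f x • ∇ g x + g x • ∇ f x := by
  simp only [gradient, fderiv_fun_mul hf hg, map_add, map_smul]

theorem hasCompactSupport_norm_gradient_sq {f : E → ℝ} (hf : HasCompactSupport f) :
    HasCompactSupport fun x => ‖∇ f x‖ ^ 2 :=
  (hf.fderiv ℝ).comp_left (g := fun ℓ => ‖(InnerProductSpace.toDual ℝ E).symm ℓ‖ ^ 2) (by simp)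

end Gradient

section Euclidean

variable {E : Type*} [NormedAddCommGroup E] [InnerProductSpace ℝ E]

theorem divergence_eq_sum_fderiv_inner {ι : Type*} [Fintype ι] (b : OrthonormalBasis ι ℝ E)
    {F : E → E} {x : E} (hF : DifferentiableAt ℝ F x) :
    divergence F x = ∑ i, fderiv ℝ (fun y => ⟪b i, F y⟫_ℝ) x (b i) := by
  rw [divergence, LinearMap.trace_eq_sum_inner _ b]
  refine Finset.sum_congr rfl fun i _ => ?_
  rw [fderiv_inner_apply ℝ (differentiableAt_const _) hF]
  simp

variable [FiniteDimensional ℝ E]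

theorem integral_fderiv_apply_eq_neg_integral_mul_divergence [MeasurableSpace E] [BorelSpace E]
    {μ : Measure E} [μ.IsAddHaarMeasure] {f : E → ℝ} {F : E → E} (hf : ContDiff ℝ 1 f)
    (hf_supp : HasCompactSupport f) (hF : ContDiff ℝ 1 F) :
    ∫ x, fderiv ℝ f x (F x) ∂μ = -∫ x, f x * divergence F x ∂μ := by
  let b := stdOrthonormalBasis ℝ E
  have hFi (i) : ContDiff ℝ 1 fun x => ⟪b i, F x⟫_ℝ := contDiff_const.inner ℝ hF
  have int_left (i) : Integrable (fun x => fderiv ℝ f x (b i) * ⟪b i, F x⟫_ℝ) μ :=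
    (((hf.continuous_fderiv one_ne_zero).clm_apply continuous_const).mul
      (hFi i).continuous).integrable_of_hasCompactSupport (hf_supp.fderiv_apply ℝ _).mul_right
  have int_right (i) : Integrable (fun x => f x * fderiv ℝ (fun y => ⟪b i, F y⟫_ℝ) x (b i)) μ :=
    (hf.continuous.mul (((hFi i).continuous_fderiv one_ne_zero).clm_apply
      continuous_const)).integrable_of_hasCompactSupport hf_supp.mul_right
  have by_parts (i) : ∫ x, f x * fderiv ℝ (fun y => ⟪b i, F y⟫_ℝ) x (b i) ∂μ =
      -∫ x, fderiv ℝ f x (b i) * ⟪b i, F x⟫_ℝ ∂μ :=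
    integral_mul_fderiv_eq_neg_fderiv_mul_of_integrable (int_left i) (int_right i)
      ((hf.continuous.mul (hFi i).continuous).integrable_of_hasCompactSupport hf_supp.mul_right)
      (fun x _ => (hf.differentiable one_ne_zero).differentiableAt)
      (fun x _ => ((hFi i).differentiable one_ne_zero).differentiableAt)
  have expand (x) : fderiv ℝ f x (F x) = ∑ i, fderiv ℝ f x (b i) * ⟪b i, F x⟫_ℝ := by
    conv_lhs => rw [← b.sum_repr' (F x)]
    simp only [map_sum, map_smul, smul_eq_mul, mul_comm]
  simp_rw [expand, divergence_eq_sum_fderiv_inner b (hF.differentiable one_ne_zero _),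
    Finset.mul_sum]
  rw [integral_finsetSum _ fun i _ => int_left i, integral_finsetSum _ fun i _ => int_right i,
    ← Finset.sum_neg_distrib]
  exact Finset.sum_congr rfl fun i _ => by rw [by_parts, neg_neg]

theorem integral_fderiv_apply_sub [MeasurableSpace E] [BorelSpace E]
    {μ : Measure E} [μ.IsAddHaarMeasure] {f : E → ℝ} (hf : ContDiff ℝ 1 f)
    (hf_supp : HasCompactSupport f) (x₀ : E) :
    ∫ x, fderiv ℝ f x (x - x₀) ∂μ = -(finrank ℝ E * ∫ x, f x ∂μ) := by
  rw [integral_fderiv_apply_eq_neg_integral_mul_divergence hf hf_supp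
    (F := fun y => y - x₀) (by fun_prop), ← integral_const_mul]
  simp_rw [divergence_sub_const, mul_comm]

theorem continuous_laplacian {F : Type*} [NormedAddCommGroup F] [NormedSpace ℝ F] {f : E → F}
    (hf : ContDiff ℝ 2 f) : Continuous (Δ f) := by
  rw [InnerProductSpace.laplacian_eq_iteratedFDeriv_stdOrthonormalBasis]
  exact continuous_finsetSum _ fun i _ =>
    (continuous_eval_const _).comp (hf.continuous_iteratedFDeriv le_rfl)

theorem hasCompactSupport_laplacian {F : Type*} [NormedAddCommGroup F] [NormedSpace ℝ F]
    {f : E → F} (hf : HasCompactSupport f) : HasCompactSupport (Δ f) := by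
  refine (hf.iteratedFDeriv (𝕜 := ℝ) 2).mono' fun x hx => subset_tsupport _ fun h => hx ?_
  simp [InnerProductSpace.laplacian_eq_iteratedFDeriv_stdOrthonormalBasis, h]

theorem laplacian_eq_divergence_gradient {f : E → ℝ} (hf : ContDiff ℝ 2 f) (x : E) :
    Δ f x = divergence (∇ f) x := by
  let b := stdOrthonormalBasis ℝ E
  rw [InnerProductSpace.laplacian_eq_iteratedFDeriv_orthonormalBasis f b, divergence,
    LinearMap.trace_eq_sum_inner _ b]
  refine Finset.sum_congr rfl fun i _ => ?_
  rw [iteratedFDeriv_two_apply, real_inner_comm]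
  exact (inner_fderiv_gradient hf x _ _).symm

theorem laplacian_mul {f g : E → ℝ} (hf : ContDiff ℝ 2 f) (hg : ContDiff ℝ 2 g) (x : E) :
    Δ (fun y => f y * g y) x = f x * Δ g x + 2 * ⟪∇ f x, ∇ g x⟫_ℝ + g x * Δ f x := by
  have df := hf.differentiable two_ne_zero
  have dg := hg.differentiable two_ne_zero
  have df' := (contDiff_gradient hf one_add_one_eq_two.le).differentiable one_ne_zero
  have dg' := (contDiff_gradient hg one_add_one_eq_two.le).differentiable one_ne_zero
  have h_grad : ∇ (fun y => f y * g y) = fun y => f y • ∇ g y + g y • ∇ f y :=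
    funext fun y => gradient_mul (df y) (dg y)
  rw [laplacian_eq_divergence_gradient (hf.mul hg), laplacian_eq_divergence_gradient hf,
    laplacian_eq_divergence_gradient hg, h_grad,
    divergence_add ((df x).fun_smul (dg' x)) ((dg x).fun_smul (df' x)),
    divergence_smul (df x) (dg' x), divergence_smul (dg x) (df' x), ← inner_gradient_left,
    ← inner_gradient_left, real_inner_comm (∇ f x)]
  ring

theorem integral_mul_laplacian [MeasurableSpace E] [BorelSpace E] {μ : Measure E}
    [μ.IsAddHaarMeasure] {f g : E → ℝ} (hf : ContDiff ℝ 1 f) (hf_supp : HasCompactSupport f)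
    (hg : ContDiff ℝ 2 g) : ∫ x, f x * Δ g x ∂μ = -∫ x, ⟪∇ f x, ∇ g x⟫_ℝ ∂μ := by
  simp_rw [inner_gradient_left, laplacian_eq_divergence_gradient hg,
    integral_fderiv_apply_eq_neg_integral_mul_divergence hf hf_supp
      (contDiff_gradient hg one_add_one_eq_two.le), neg_neg]

end Euclidean

section Dilation

variable {E : Type*} [NormedAddCommGroup E] [InnerProductSpace ℝ E]

/-- The first-order operator `2 (x - x₀) · ∇ + n`: up to a factor, the generator of the dilations
about `x₀`, normalised so as to preserve the `L²` norm; it is therefore antisymmetric. -/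
noncomputable def dilationGen (x₀ : E) (v : E → ℝ) (x : E) : ℝ :=
  2 * fderiv ℝ v x (x - x₀) + finrank ℝ E * v x

theorem contDiff_dilationGen {v : E → ℝ} {m n : ℕ∞ω} (hv : ContDiff ℝ n v) (hmn : m + 1 ≤ n)
    (x₀ : E) : ContDiff ℝ m (dilationGen x₀ v) := by
  have hv' : ContDiff ℝ m (fderiv ℝ v) := hv.fderiv_right hmn
  have hvm : ContDiff ℝ m v := hv.of_le (le_self_add.trans hmn)
  unfold dilationGen
  fun_prop

theorem hasCompactSupport_dilationGen {v : E → ℝ} (hv : HasCompactSupport v) (x₀ : E) :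
    HasCompactSupport (dilationGen x₀ v) :=
  (hasCompactSupport_fderiv_apply hv _).mul_left.add hv.mul_left

variable [FiniteDimensional ℝ E]

theorem inner_gradient_dilationGen {v : E → ℝ} (hv : ContDiff ℝ 2 v) (x₀ x : E) :
    ⟪∇ (dilationGen x₀ v) x, ∇ v x⟫_ℝ =
      (finrank ℝ E + 2) * ‖∇ v x‖ ^ 2 + fderiv ℝ (fun y => ‖∇ v y‖ ^ 2) x (x - x₀) := by
  have dv : DifferentiableAt ℝ v x := hv.differentiable two_ne_zero x
  have dv' : DifferentiableAt ℝ (fderiv ℝ v) x :=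
    (hv.fderiv_right one_add_one_eq_two.le).differentiable one_ne_zero x
  have d_grad : DifferentiableAt ℝ (∇ v) x :=
    (contDiff_gradient hv one_add_one_eq_two.le).differentiable one_ne_zero x
  have fderiv_dilation (h : E) : fderiv ℝ (dilationGen x₀ v) x h =
      2 * (fderiv ℝ (fderiv ℝ v) x h (x - x₀) + fderiv ℝ v x h) +
        finrank ℝ E * fderiv ℝ v x h := by
    unfold dilationGen
    rw [fderiv_fun_add (by fun_prop) (by fun_prop), fderiv_const_mul (by fun_prop),
      fderiv_const_mul dv, fderiv_clm_apply dv' (by fun_prop), fderiv_sub_const, fderiv_fun_id]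
    simp only [add_apply, smul_apply, ContinuousLinearMap.flip_apply,
      ContinuousLinearMap.comp_apply, ContinuousLinearMap.id_apply, smul_eq_mul]
    ring
  have fderiv_norm_sq : fderiv ℝ (fun y => ‖∇ v y‖ ^ 2) x (x - x₀) =
      2 * fderiv ℝ (fderiv ℝ v) x (∇ v x) (x - x₀) := by
    have symm : IsSymmSndFDerivAt ℝ v x := hv.contDiffAt.isSymmSndFDerivAt (by simp)
    rw [symm.eq, ← inner_fderiv_gradient hv, d_grad.hasFDerivAt.norm_sq.fderiv]
    simp
  rw [inner_gradient_left, fderiv_dilation, fderiv_norm_sq, ← inner_gradient_left,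
    real_inner_self_eq_norm_sq]
  ring

variable [MeasurableSpace E] [BorelSpace E] {μ : Measure E} [μ.IsAddHaarMeasure]

theorem integral_dilationGen_mul_laplacian {v : E → ℝ} (hv : ContDiff ℝ 2 v)
    (hv_supp : HasCompactSupport v) (x₀ : E) :
    ∫ x, dilationGen x₀ v x * Δ v x ∂μ = -(2 * ∫ x, ‖∇ v x‖ ^ 2 ∂μ) := by
  have grad_sq : ContDiff ℝ 1 fun x => ‖∇ v x‖ ^ 2 :=
    (contDiff_gradient hv one_add_one_eq_two.le).norm_sq ℝ
  have grad_sq_supp : HasCompactSupport fun x => ‖∇ v x‖ ^ 2 :=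
    hasCompactSupport_norm_gradient_sq hv_supp
  rw [integral_mul_laplacian (contDiff_dilationGen hv one_add_one_eq_two.le x₀)
    (hasCompactSupport_dilationGen hv_supp x₀) hv]
  simp_rw [inner_gradient_dilationGen hv]
  rw [integral_add, integral_const_mul, integral_fderiv_apply_sub grad_sq grad_sq_supp]
  · ring
  · exact (grad_sq.continuous.integrable_of_hasCompactSupport grad_sq_supp).const_mul _
  · exact integrable_fderiv_apply grad_sq grad_sq_supp (by fun_prop)

theorem integral_mul_mul_dilationGen {w v : E → ℝ} (hw : ContDiff ℝ 1 w) (hv : ContDiff ℝ 1 v)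
    (hv_supp : HasCompactSupport v) (x₀ : E) :
    ∫ x, w x * v x * dilationGen x₀ v x ∂μ = -∫ x, fderiv ℝ w x (x - x₀) * v x ^ 2 ∂μ := by
  have dw := hw.differentiable one_ne_zero
  have dv := hv.differentiable one_ne_zero
  have sq_supp : HasCompactSupport fun x => v x ^ 2 :=
    hv_supp.comp_left (g := fun t => t ^ 2) (by simp)
  have wv_sq : ContDiff ℝ 1 fun x => w x * v x ^ 2 := by fun_prop
  have wv_sq_supp : HasCompactSupport fun x => w x * v x ^ 2 := sq_supp.mul_left
  have pointwise (x) : w x * v x * dilationGen x₀ v x =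
      fderiv ℝ (fun y => w y * v y ^ 2) x (x - x₀) + finrank ℝ E * (w x * v x ^ 2) -
        fderiv ℝ w x (x - x₀) * v x ^ 2 := by
    rw [fderiv_fun_mul (dw x) (by fun_prop), fderiv_fun_pow 2 (dv x), dilationGen]
    simp only [map_sub, Nat.add_one_sub_one, pow_one, nsmul_eq_mul, Nat.cast_ofNat, add_apply,
      smul_apply, smul_eq_mul]
    ring
  simp_rw [pointwise]
  have int_left : Integrable (fun x => fderiv ℝ (fun y => w y * v y ^ 2) x (x - x₀)) μ :=
    integrable_fderiv_apply wv_sq wv_sq_supp (by fun_prop)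
  have int_mid : Integrable (fun x => finrank ℝ E * (w x * v x ^ 2)) μ :=
    (wv_sq.continuous.integrable_of_hasCompactSupport wv_sq_supp).const_mul _
  have int_right : Integrable (fun x => fderiv ℝ w x (x - x₀) * v x ^ 2) μ :=
    (((hw.continuous_fderiv one_ne_zero).clm_apply (by fun_prop)).mul
      (hv.continuous.pow 2)).integrable_of_hasCompactSupport sq_supp.mul_left
  rw [integral_sub (int_left.fun_add int_mid) int_right, integral_add int_left int_mid,
    integral_fderiv_apply_sub wv_sq wv_sq_supp, integral_const_mul]
  ring

theorem finrank_mul_integral_sq_le {v : E → ℝ} (hv : ContDiff ℝ 1 v)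
    (hv_supp : HasCompactSupport v) (c : ℝ) (x₀ : E) :
    finrank ℝ E * c * ∫ x, v x ^ 2 ∂μ ≤
      ∫ x, ‖∇ v x‖ ^ 2 ∂μ + c ^ 2 * ∫ x, ‖x - x₀‖ ^ 2 * v x ^ 2 ∂μ := by
  have sq_supp : HasCompactSupport fun x => v x ^ 2 :=
    hv_supp.comp_left (g := fun t => t ^ 2) (by simp)
  have sq_contDiff : ContDiff ℝ 1 fun x => v x ^ 2 := hv.pow 2
  have square (x) : ‖∇ v x + (c * v x) • (x - x₀)‖ ^ 2 =
      c * fderiv ℝ (fun y => v y ^ 2) x (x - x₀) +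
        (‖∇ v x‖ ^ 2 + c ^ 2 * (‖x - x₀‖ ^ 2 * v x ^ 2)) := by
    rw [norm_add_sq_real, inner_smul_right, inner_gradient_left, norm_smul, mul_pow, norm_eq_abs,
      sq_abs, fderiv_fun_pow 2 (hv.differentiable one_ne_zero x)]
    simp only [map_sub, Nat.add_one_sub_one, pow_one, nsmul_eq_mul, Nat.cast_ofNat, smul_apply,
      smul_eq_mul]
    ring
  have int_dilation : Integrable (fun x => c * fderiv ℝ (fun y => v y ^ 2) x (x - x₀)) μ :=
    (integrable_fderiv_apply sq_contDiff sq_supp (by fun_prop)).const_mul c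
  have cont_grad : Continuous (∇ v) := (contDiff_gradient (m := 0) hv (by simp)).continuous
  have int_grad : Integrable (fun x => ‖∇ v x‖ ^ 2) μ :=
    (cont_grad.norm.pow 2).integrable_of_hasCompactSupport
      (hasCompactSupport_norm_gradient_sq hv_supp)
  have int_moment : Integrable (fun x => ‖x - x₀‖ ^ 2 * v x ^ 2) μ :=
    (((by fun_prop : Continuous fun x => ‖x - x₀‖ ^ 2).mul
      (hv.continuous.pow 2)).integrable_of_hasCompactSupport sq_supp.mul_left)
  have nonneg : 0 ≤ ∫ x, ‖∇ v x + (c * v x) • (x - x₀)‖ ^ 2 ∂μ :=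
    integral_nonneg fun x => sq_nonneg _
  simp_rw [square] at nonneg
  rw [integral_add int_dilation (int_grad.fun_add (int_moment.const_mul _)), integral_const_mul,
    integral_add int_grad (int_moment.const_mul _), integral_const_mul,
    integral_fderiv_apply_sub sq_contDiff sq_supp] at nonneg
  linarith

end Dilation

section Gaussian

variable {E : Type*} [NormedAddCommGroup E]

/-- The Gaussian weight centred at `x₀`; the rate `c` may have either sign, so that
`gaussian x₀ (-c)` is the reciprocal of `gaussian x₀ c`. -/
noncomputable def gaussian (x₀ : E) (c : ℝ) (x : E) : ℝ :=
  exp (c * ‖x - x₀‖ ^ 2)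

theorem gaussian_pos (x₀ : E) (c : ℝ) (x : E) : 0 < gaussian x₀ c x :=
  exp_pos _

theorem gaussian_mul_gaussian_neg (x₀ : E) (c : ℝ) (x : E) :
    gaussian x₀ c x * gaussian x₀ (-c) x = 1 := by
  rw [gaussian, gaussian, ← exp_add, neg_mul, add_neg_cancel, exp_zero]

theorem div_gaussian_half_sq (x₀ : E) (c t : ℝ) (x : E) :
    (t / gaussian x₀ (c / 2) x) ^ 2 = t ^ 2 * exp (-(c * ‖x - x₀‖ ^ 2)) := by
  rw [div_pow, gaussian, ← exp_nat_mul, exp_neg, div_eq_mul_inv]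
  push_cast
  ring_nf

variable [InnerProductSpace ℝ E]

theorem contDiff_gaussian (x₀ : E) (c : ℝ) {k : ℕ∞ω} : ContDiff ℝ k (gaussian x₀ c) := by
  have : ContDiff ℝ k fun x => ‖x - x₀‖ ^ 2 := (contDiff_id.sub contDiff_const).norm_sq ℝ
  unfold gaussian
  fun_prop

theorem fderiv_norm_sub_sq (x₀ x h : E) :
    fderiv ℝ (fun y => ‖y - x₀‖ ^ 2) x h = 2 * ⟪x - x₀, h⟫_ℝ := by
  have : HasFDerivAt (fun y => y - x₀) (.id ℝ E) x := (hasFDerivAt_id x).sub_const x₀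
  rw [this.norm_sq.fderiv]
  simp [inner_sub_left]

theorem gradient_gaussian [CompleteSpace E] (x₀ : E) (c : ℝ) :
    ∇ (gaussian x₀ c) = fun x => (2 * c * gaussian x₀ c x) • (x - x₀) := by
  refine funext fun x => ext_inner_right ℝ fun h => ?_
  have d_norm : DifferentiableAt ℝ (fun y => ‖y - x₀‖ ^ 2) x :=
    (differentiableAt_id.sub_const x₀).norm_sq ℝ
  unfold gaussian
  rw [inner_gradient_left, fderiv_exp (d_norm.const_mul c), fderiv_const_mul d_norm,
    real_inner_smul_left]
  simp only [smul_apply, fderiv_norm_sub_sq, smul_eq_mul]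
  ring

variable [FiniteDimensional ℝ E]

theorem laplacian_gaussian (x₀ : E) (c : ℝ) (x : E) :
    Δ (gaussian x₀ c) x =
      gaussian x₀ c x * (2 * c * finrank ℝ E + 4 * c ^ 2 * ‖x - x₀‖ ^ 2) := by
  have d_gaussian : DifferentiableAt ℝ (gaussian x₀ c) x :=
    (contDiff_gaussian x₀ c).differentiable one_ne_zero x
  rw [laplacian_eq_divergence_gradient (contDiff_gaussian x₀ c), gradient_gaussian,
    divergence_smul (d_gaussian.const_mul _) (by fun_prop), divergence_sub_const,
    fderiv_const_mul d_gaussian, smul_apply, ← inner_gradient_left, gradient_gaussian,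
    real_inner_smul_left, real_inner_self_eq_norm_sq, smul_eq_mul]
  ring

theorem laplacian_gaussian_mul {v : E → ℝ} (hv : ContDiff ℝ 2 v) (x₀ : E) (c : ℝ) (x : E) :
    Δ (fun y => gaussian x₀ c y * v y) x =
      gaussian x₀ c x * (Δ v x + 2 * c * dilationGen x₀ v x + 4 * c ^ 2 * ‖x - x₀‖ ^ 2 * v x) := by
  rw [laplacian_mul (contDiff_gaussian x₀ c) hv, laplacian_gaussian, gradient_gaussian,
    real_inner_smul_left, real_inner_comm, inner_gradient_left, dilationGen]
  ring

end Gaussian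

section WeightedEstimate

variable {E : Type*} [NormedAddCommGroup E] [InnerProductSpace ℝ E] [FiniteDimensional ℝ E]

/-- The symmetric part of `exp (lam * ‖x - x₀‖ ^ 2 / 2) (Δ + a) exp (-lam * ‖x - x₀‖ ^ 2 / 2)`; the
antisymmetric part of this operator is `-lam • dilationGen x₀`. -/
noncomputable def conjSymmPart (x₀ : E) (lam a : ℝ) (v : E → ℝ) (x : E) : ℝ :=
  Δ v x + (lam ^ 2 * ‖x - x₀‖ ^ 2 + a) * v x

theorem gaussian_mul_laplacian_add_mul {p : E → ℝ} (hp : ContDiff ℝ 2 p) (x₀ : E) (lam a : ℝ)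
    (x : E) : gaussian x₀ (lam / 2) x * (Δ p x + a * p x) =
      conjSymmPart x₀ lam a (fun y => gaussian x₀ (lam / 2) y * p y) x -
        lam * dilationGen x₀ (fun y => gaussian x₀ (lam / 2) y * p y) x := by
  set v := fun y => gaussian x₀ (lam / 2) y * p y
  have hv : ContDiff ℝ 2 v := (contDiff_gaussian x₀ _).mul hp
  have hpv : p = fun y => gaussian x₀ (-(lam / 2)) y * v y := funext fun y => by
    rw [mul_left_comm, ← mul_assoc, gaussian_mul_gaussian_neg, one_mul]
  calc gaussian x₀ (lam / 2) x * (Δ p x + a * p x)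
      = gaussian x₀ (lam / 2) x * gaussian x₀ (-(lam / 2)) x * (Δ v x
          + 2 * -(lam / 2) * dilationGen x₀ v x + 4 * (-(lam / 2)) ^ 2 * ‖x - x₀‖ ^ 2 * v x
          + a * v x) := by
        rw [hpv, laplacian_gaussian_mul hv]
        ring
    _ = conjSymmPart x₀ lam a v x - lam * dilationGen x₀ v x := by
        rw [gaussian_mul_gaussian_neg, conjSymmPart]
        ring

variable [MeasurableSpace E] [BorelSpace E] {μ : Measure E} [μ.IsAddHaarMeasure]

theorem integral_conjSymmPart_mul_dilationGen {v : E → ℝ} (hv : ContDiff ℝ 2 v)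
    (hv_supp : HasCompactSupport v) (x₀ : E) (lam a : ℝ) :
    ∫ x, conjSymmPart x₀ lam a v x * dilationGen x₀ v x ∂μ =
      -(2 * (∫ x, ‖∇ v x‖ ^ 2 ∂μ + lam ^ 2 * ∫ x, ‖x - x₀‖ ^ 2 * v x ^ 2 ∂μ)) := by
  let w := fun x => lam ^ 2 * ‖x - x₀‖ ^ 2 + a
  have d_norm : ContDiff ℝ 1 fun x => ‖x - x₀‖ ^ 2 := (contDiff_id.sub contDiff_const).norm_sq ℝ
  have hw : ContDiff ℝ 1 w := by fun_prop
  have fderiv_w (x) : fderiv ℝ w x (x - x₀) = 2 * lam ^ 2 * ‖x - x₀‖ ^ 2 := by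
    have d_norm_at := d_norm.differentiable one_ne_zero x
    rw [fderiv_add_const, fderiv_const_mul d_norm_at, smul_apply, fderiv_norm_sub_sq,
      real_inner_self_eq_norm_sq, smul_eq_mul]
    ring
  have cont_dilation : Continuous (dilationGen x₀ v) :=
    (contDiff_dilationGen (m := 0) hv one_le_two x₀).continuous
  have int_laplacian : Integrable (fun x => dilationGen x₀ v x * Δ v x) μ :=
    (cont_dilation.mul (continuous_laplacian hv)).integrable_of_hasCompactSupport
      (hasCompactSupport_laplacian hv_supp).mul_left
  have int_potential : Integrable (fun x => w x * v x * dilationGen x₀ v x) μ :=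
    ((hw.continuous.mul hv.continuous).mul cont_dilation).integrable_of_hasCompactSupport
      hv_supp.mul_left.mul_right
  calc ∫ x, conjSymmPart x₀ lam a v x * dilationGen x₀ v x ∂μ
      = ∫ x, dilationGen x₀ v x * Δ v x + w x * v x * dilationGen x₀ v x ∂μ := by
        refine integral_congr_ae (.of_forall fun x => ?_)
        simp only [conjSymmPart, w]
        ring
    _ = -(2 * ∫ x, ‖∇ v x‖ ^ 2 ∂μ) - ∫ x, fderiv ℝ w x (x - x₀) * v x ^ 2 ∂μ := by
        rw [integral_add int_laplacian int_potential, integral_dilationGen_mul_laplacian hv hv_supp,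
          integral_mul_mul_dilationGen hw (hv.of_le one_le_two) hv_supp, sub_eq_add_neg]
    _ = -(2 * (∫ x, ‖∇ v x‖ ^ 2 ∂μ + lam ^ 2 * ∫ x, ‖x - x₀‖ ^ 2 * v x ^ 2 ∂μ)) := by
        simp only [fderiv_w, mul_assoc, integral_const_mul]
        ring

theorem integral_sq_le_integral_conj_sq {v : E → ℝ} (hv : ContDiff ℝ 2 v)
    (hv_supp : HasCompactSupport v) (x₀ : E) {lam : ℝ} (hlam : 0 ≤ lam) (a : ℝ) :
    8 * finrank ℝ E * lam ^ 2 * ∫ x, v x ^ 2 ∂μ ≤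
      ∫ x, (conjSymmPart x₀ lam a v x - lam * dilationGen x₀ v x) ^ 2 ∂μ := by
  have memLp_symm : MemLp (conjSymmPart x₀ lam a v) 2 μ :=
    ((continuous_laplacian hv).add (.mul (by fun_prop) hv.continuous)).memLp_of_hasCompactSupport
      ((hasCompactSupport_laplacian hv_supp).add hv_supp.mul_left)
  have memLp_antisymm : MemLp (dilationGen x₀ v) 2 μ :=
    (contDiff_dilationGen (m := 0) hv one_le_two x₀).continuous.memLp_of_hasCompactSupport
      (hasCompactSupport_dilationGen hv_supp x₀)
  calc 8 * finrank ℝ E * lam ^ 2 * ∫ x, v x ^ 2 ∂μ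
      = 8 * lam * (finrank ℝ E * lam * ∫ x, v x ^ 2 ∂μ) := by ring
    _ ≤ 8 * lam * (∫ x, ‖∇ v x‖ ^ 2 ∂μ + lam ^ 2 * ∫ x, ‖x - x₀‖ ^ 2 * v x ^ 2 ∂μ) := by
        gcongr
        exact finrank_mul_integral_sq_le (hv.of_le one_le_two) hv_supp lam x₀
    _ = -(4 * lam * ∫ x, conjSymmPart x₀ lam a v x * dilationGen x₀ v x ∂μ) := by
        rw [integral_conjSymmPart_mul_dilationGen hv hv_supp]
        ring
    _ ≤ ∫ x, (conjSymmPart x₀ lam a v x - lam * dilationGen x₀ v x) ^ 2 ∂μ :=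
        neg_four_mul_integral_mul_le memLp_symm memLp_antisymm lam

theorem integral_gaussian_mul_sq_le {p : E → ℝ} (hp : ContDiff ℝ 2 p)
    (hp_supp : HasCompactSupport p) (x₀ : E) {lam : ℝ} (hlam : 0 ≤ lam) (a : ℝ) :
    8 * finrank ℝ E * lam ^ 2 * ∫ x, (gaussian x₀ (lam / 2) x * p x) ^ 2 ∂μ ≤
      ∫ x, (gaussian x₀ (lam / 2) x * (Δ p x + a * p x)) ^ 2 ∂μ := by
  simp_rw [gaussian_mul_laplacian_add_mul hp]
  exact integral_sq_le_integral_conj_sq ((contDiff_gaussian x₀ _).mul hp) hp_supp.mul_left x₀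
    hlam a

end WeightedEstimate

section Solvability

/-- The inclusion of the compactly supported functions of class `C^k` into all functions, as a
linear map; it is the operator on the data side of the weak formulation. -/
noncomputable def testFunctionCoe {E F : Type*} [NormedAddCommGroup E] [NormedSpace ℝ E]
    [NormedAddCommGroup F] [NormedSpace ℝ F] {Ω : Opens E} {k : ℕ∞} : 𝓓^{k}(Ω, F) →ₗ[ℝ] E → F where
  toFun ψ := ψ
  map_add' := FunLike.coe_add
  map_smul' := FunLike.coe_smul

variable {E : Type*} [NormedAddCommGroup E] [InnerProductSpace ℝ E] [FiniteDimensional ℝ E]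

/-- The operator `Δ + a` on compactly supported functions of class `C²`. -/
noncomputable def laplacianAddMul (a : ℝ) : 𝓓^{2}((⊤ : Opens E), ℝ) →ₗ[ℝ] E → ℝ where
  toFun ψ x := Δ (ψ : E → ℝ) x + a * ψ x
  map_add' φ ψ := funext fun x => by
    rw [FunLike.coe_add, φ.contDiff.contDiffAt.laplacian_add ψ.contDiff.contDiffAt]
    simp only [Pi.add_apply]
    ring
  map_smul' c ψ := funext fun x => by
    rw [FunLike.coe_smul, InnerProductSpace.laplacian_smul c ψ.contDiff.contDiffAt]
    simp only [Pi.smul_apply, smul_eq_mul, RingHom.id_apply]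
    ring

theorem stmt11_general [Nontrivial E] [MeasurableSpace E] [BorelSpace E] {μ : Measure E}
    [μ.IsAddHaarMeasure] {lam : ℝ} (a : ℝ) (hlam : 0 < lam) (x₀ : E) {f : E → ℝ}
    (hf : AEStronglyMeasurable f μ)
    (hf2 : Integrable (fun x => f x ^ 2 * exp (-(lam * ‖x - x₀‖ ^ 2))) μ) :
    ∃ u : E → ℝ, LocallyIntegrable u μ ∧
      Integrable (fun x => u x ^ 2 * exp (-(lam * ‖x - x₀‖ ^ 2))) μ ∧
      (∀ ψ : E → ℝ, ContDiff ℝ 2 ψ → HasCompactSupport ψ →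
        ∫ x, u x * (Δ ψ x + a * ψ x) ∂μ = ∫ x, f x * ψ x ∂μ) ∧
      ∫ x, u x ^ 2 * exp (-(lam * ‖x - x₀‖ ^ 2)) ∂μ ≤
        1 / (8 * finrank ℝ E * lam ^ 2) * ∫ x, f x ^ 2 * exp (-(lam * ‖x - x₀‖ ^ 2)) ∂μ := by
  have finrank_pos : 0 < finrank ℝ E := Module.finrank_pos
  let w := gaussian x₀ (lam / 2)
  have w_cont : Continuous w := (contDiff_gaussian (k := 0) x₀ _).continuous
  have w_ne (x) : w x ≠ 0 := (gaussian_pos x₀ _ x).ne'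
  have hfw_meas : AEStronglyMeasurable (fun x => f x / w x) μ :=
    hf.div₀ w_cont.aestronglyMeasurable
  have hfw : MemLp (fun x => f x / w x) 2 μ := by
    rw [memLp_two_iff_integrable_sq hfw_meas]
    simpa only [w, div_gaussian_half_sq] using hf2
  have memLp_test (ψ : 𝓓^{2}((⊤ : Opens E), ℝ)) : MemLp (fun x => w x * ψ x) 2 μ :=
    (w_cont.mul ψ.continuous).memLp_of_hasCompactSupport ψ.hasCompactSupport.mul_left
  have memLp_op (ψ : 𝓓^{2}((⊤ : Opens E), ℝ)) :
      MemLp (fun x => w x * laplacianAddMul a ψ x) 2 μ :=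
    (w_cont.mul ((continuous_laplacian ψ.contDiff).add
      (ψ.continuous.const_mul a))).memLp_of_hasCompactSupport
      ((hasCompactSupport_laplacian ψ.hasCompactSupport).add ψ.hasCompactSupport.mul_left).mul_left
  have const_pos : 0 < 8 * (finrank ℝ E : ℝ) * lam ^ 2 := by positivity
  obtain ⟨u, hu, hu_le, hu_eq⟩ := exists_memLp_two_div_integral_mul_eq (J := testFunctionCoe)
    w_ne memLp_test memLp_op const_pos
    (fun ψ => integral_gaussian_mul_sq_le ψ.contDiff ψ.hasCompactSupport x₀ hlam.le a) hfw
  refine ⟨u, locallyIntegrable_of_memLp_div hu one_le_two w_cont w_ne, ?_, fun ψ hψ hψ_supp =>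
    hu_eq ⟨ψ, hψ, hψ_supp, Set.subset_univ _⟩, ?_⟩
  · simpa only [w, div_gaussian_half_sq] using hu.integrable_sq
  · rw [one_div, ← div_eq_inv_mul, le_div_iff₀' const_pos]
    simpa only [w, div_gaussian_half_sq] using hu_le

end Solvability

theorem lap_eq_laplacian {n : ℕ} {ψ : EuclideanSpace ℝ (Fin n) → ℝ} (hψ : ContDiff ℝ 2 ψ) :
    lap ψ = Δ ψ := by
  rw [InnerProductSpace.laplacian_eq_iteratedFDeriv_orthonormalBasis ψ
    (EuclideanSpace.basisFun (Fin n) ℝ)]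
  have dψ' : Differentiable ℝ (fderiv ℝ ψ) :=
    (hψ.fderiv_right one_add_one_eq_two.le).differentiable one_ne_zero
  refine funext fun x => Finset.sum_congr rfl fun i _ => ?_
  rw [fderiv_clm_apply (dψ' x) (differentiableAt_const _), iteratedFDeriv_two_apply]
  simp

theorem isWeakSolution_of_laplacian {n : ℕ} {a : ℝ} {u f : EuclideanSpace ℝ (Fin n) → ℝ}
    (h : ∀ ψ : EuclideanSpace ℝ (Fin n) → ℝ, ContDiff ℝ 2 ψ → HasCompactSupport ψ →
      ∫ x, u x * (Δ ψ x + a * ψ x) = ∫ x, f x * ψ x) : IsWeakSolution a u f := by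
  intro ψ hψ hψ_supp
  have hψ2 : ContDiff ℝ 2 ψ := contDiff_infty.1 hψ 2
  rw [lap_eq_laplacian hψ2, h ψ hψ2 hψ_supp]

theorem stmt11 (n : ℕ) (hn : 0 < n) (lam a : ℝ) (hlam : 0 < lam)
    (x₀ : EuclideanSpace ℝ (Fin n)) (f : EuclideanSpace ℝ (Fin n) → ℝ)
    (hf : LocallyIntegrable f volume)
    (hf2 : Integrable (fun x => f x ^ 2 * Real.exp (-(lam * ‖x - x₀‖ ^ 2))) volume) :
    ∃ u : EuclideanSpace ℝ (Fin n) → ℝ,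
      LocallyIntegrable u volume ∧
      Integrable (fun x => u x ^ 2 * Real.exp (-(lam * ‖x - x₀‖ ^ 2))) volume ∧
      IsWeakSolution a u f ∧
      ∫ x, u x ^ 2 * Real.exp (-(lam * ‖x - x₀‖ ^ 2)) ≤
        (1 / (8 * n * lam ^ 2)) * ∫ x, f x ^ 2 * Real.exp (-(lam * ‖x - x₀‖ ^ 2)) := by
  have : Nonempty (Fin n) := ⟨⟨0, hn⟩⟩
  obtain ⟨u, hu, hu2, hu_weak, hu_le⟩ := stmt11_general a hlam x₀ hf.aestronglyMeasurable hf2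
  exact ⟨u, hu, hu2, isWeakSolution_of_laplacian hu_weak,
    by simpa only [finrank_euclideanSpace_fin] using hu_le⟩
end
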